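/- For all sufficiently large positive integers N, R_N(SL) > 3·N; in particular, any linear upper bound R_N(SL) ≤ C·N must have C > 3. -/

import Mathlib

/-- Weyl dimension (type A), 0-indexed, for `SL_{k+1}(ℂ)`. -/
def PA (k : ℕ) (a : Fin k → ℕ) : ℚ :=
  ∏ i ∈ Finset.range (k + 1), ∏ j ∈ Finset.range (k + 1),
    if i < j then
      ((∑ t ∈ Finset.Ico i j, if h : t < k then (a ⟨t, h⟩ : ℚ) else 0) / ((j : ℚ) - (i : ℚ)))
    else 1

/-- Pairs `(n, a)` counted by `R_N(SL)`: `n = k + 2 ≥ 2`, `a` a tuple of `k + 1` positive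
integers, nontrivial (some `a i ≥ 2`), dimension `≤ N`. -/
def SLSet (N : ℕ) : Set (Σ k : ℕ, Fin (k + 1) → ℕ) :=
  {p | (∀ i, 1 ≤ p.2 i) ∧ (∃ i, 2 ≤ p.2 i) ∧ PA (p.1 + 1) p.2 ≤ (N : ℚ)}

/-!
Weyl's product is monotone in the tuple `a`. For `SL_{k+1}` with highest weight a multiple of a
fundamental weight it telescopes into binomial coefficients: `Sym^c` of the standard representation
has dimension `(k + c).choose c`, and its exterior power of degree `s + 1` has dimension
`(k + 1).choose (s + 1)`. Every nontrivial tuple dominates that of some exterior power, so its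
dimension is at least `n = k + 1`; as the dimension also bounds the entries, `SLSet N` is finite.

For the lower bound, `SL₂` contributes `N - 1` representations, and each `SL_n` with `3 ≤ n ≤ N`
contributes the standard one and its dual. This gives `3 * N - 5`, and once `N ≥ 36` the powers
`Sym^c` of `SL₃` with `2 ≤ c ≤ 7`, of dimension at most `(7 + 2).choose 2 = 36`, supply six more.
-/

open Finset Function

theorem le_choose {n m : ℕ} (hm : 0 < m) (hmn : m < n) : n ≤ n.choose m := by
  induction n with
  | zero => exact Nat.zero_le _
  | succ n ih =>
    obtain ⟨m, rfl⟩ := Nat.exists_eq_succ_of_ne_zero hm.ne'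
    rw [Nat.choose_succ_succ]
    rcases (Nat.lt_succ_iff.mp hmn).eq_or_lt with rfl | hlt
    · simp
    · have := ih hlt
      have := Nat.choose_pos (Nat.le_of_succ_le hlt.le)
      omega

section WeylFactor

variable {k : ℕ}

/-- The positive roots `e_i - e_j` of `SL_{k+1}`, encoded as the pairs `(i, j)` with
`i < j ≤ k`. -/
def positiveRoots (k : ℕ) : Finset (ℕ × ℕ) :=
  (range (k + 1) ×ˢ range (k + 1)).filter fun r => r.1 < r.2

@[simp]
theorem mem_positiveRoots {r : ℕ × ℕ} : r ∈ positiveRoots k ↔ r.1 < r.2 ∧ r.2 ≤ k := by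
  simp only [positiveRoots, mem_filter, mem_product, mem_range]
  omega

/-- The factor of Weyl's dimension formula at the positive root `r`. Entries of `a` beyond its
length count as `0`, as in `PA`; they do not occur for `r ∈ positiveRoots k`. -/
def weylFactor (a : Fin k → ℕ) (r : ℕ × ℕ) : ℚ :=
  (∑ t ∈ Ico r.1 r.2, if h : t < k then (a ⟨t, h⟩ : ℚ) else 0) / ((r.2 : ℚ) - (r.1 : ℚ))

theorem PA_eq_prod_weylFactor (a : Fin k → ℕ) :
    PA k a = ∏ r ∈ positiveRoots k, weylFactor a r := by
  rw [positiveRoots, prod_filter, prod_product]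
  rfl

theorem weylFactor_mono {r : ℕ × ℕ} (hr : r.1 ≤ r.2) :
    Monotone fun a : Fin k → ℕ => weylFactor a r := by
  intro a b hab
  have hden : (0 : ℚ) ≤ (r.2 : ℚ) - r.1 := sub_nonneg.mpr (Nat.cast_le.mpr hr)
  refine div_le_div_of_nonneg_right (sum_le_sum fun t _ => ?_) hden
  split_ifs with h
  · exact Nat.cast_le.mpr (hab ⟨t, h⟩)
  · exact le_rfl

theorem weylFactor_nonneg (a : Fin k → ℕ) {r : ℕ × ℕ} (hr : r.1 ≤ r.2) : 0 ≤ weylFactor a r := by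
  calc 0 = weylFactor (0 : Fin k → ℕ) r := by simp [weylFactor]
    _ ≤ weylFactor a r := weylFactor_mono hr fun i => Nat.zero_le (a i)

theorem weylFactor_update (s : Fin k) (c : ℕ) {r : ℕ × ℕ} (hr : r ∈ positiveRoots k) :
    weylFactor (update 1 s (c + 1)) r =
      if r.1 ≤ s ∧ s < r.2 then ((r.2 : ℚ) - r.1 + c) / ((r.2 : ℚ) - r.1) else 1 := by
  obtain ⟨i, j⟩ := r
  obtain ⟨hij, hjk⟩ := mem_positiveRoots.mp hr
  dsimp only at hij hjk ⊢
  have hden : (j : ℚ) - i ≠ 0 := sub_ne_zero.mpr (Nat.cast_injective.ne hij.ne')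
  have hentry : ∀ t ∈ Ico i j, (if h : t < k then
      ((update 1 s (c + 1) : Fin k → ℕ) ⟨t, h⟩ : ℚ) else 0) = 1 + if t = s then (c : ℚ) else 0 := by
    intro t ht
    rw [dif_pos ((mem_Ico.mp ht).2.trans_le hjk)]
    by_cases hts : t = s
    · simp [hts, add_comm]
    · simp [hts, update_of_ne (Fin.ne_of_val_ne hts : (⟨t, _⟩ : Fin k) ≠ s)]
  have hsum : ∑ t ∈ Ico i j, ((1 : ℚ) + if t = s then (c : ℚ) else 0) =
      (j : ℚ) - i + if i ≤ s ∧ s < j then (c : ℚ) else 0 := by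
    simp [sum_add_distrib, Nat.cast_sub hij.le]
  rw [weylFactor, sum_congr rfl hentry, hsum]
  split_ifs
  · rfl
  · rw [add_zero, div_self hden]

theorem weylFactor_one {r : ℕ × ℕ} (hr : r ∈ positiveRoots k) :
    weylFactor (1 : Fin k → ℕ) r = 1 := by
  have hk : 0 < k := by
    have := mem_positiveRoots.mp hr
    omega
  have hden : (r.2 : ℚ) - r.1 ≠ 0 :=
    sub_ne_zero.mpr (Nat.cast_injective.ne (mem_positiveRoots.mp hr).1.ne')
  simpa [hden] using weylFactor_update (⟨0, hk⟩ : Fin k) 0 hr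

theorem one_le_weylFactor {a : Fin k → ℕ} (ha : 1 ≤ a) {r : ℕ × ℕ} (hr : r ∈ positiveRoots k) :
    1 ≤ weylFactor a r :=
  (weylFactor_one hr).ge.trans (weylFactor_mono (mem_positiveRoots.mp hr).1.le ha)

end WeylFactor

section Dimension

variable {k : ℕ}

theorem PA_mono (k : ℕ) : Monotone (PA k) := by
  intro a b hab
  simp only [PA_eq_prod_weylFactor]
  exact prod_le_prod (fun r hr => weylFactor_nonneg a (mem_positiveRoots.mp hr).1.le)
    fun r hr => weylFactor_mono (mem_positiveRoots.mp hr).1.le hab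

theorem apply_le_PA {a : Fin k → ℕ} (ha : 1 ≤ a) (s : Fin k) : (a s : ℚ) ≤ PA k a := by
  have hs : ((s : ℕ), (s : ℕ) + 1) ∈ positiveRoots k := by simp
  calc (a s : ℚ) = ∏ r ∈ {((s : ℕ), (s : ℕ) + 1)}, weylFactor a r := by simp [weylFactor]
    _ ≤ ∏ r ∈ positiveRoots k, weylFactor a r :=
      prod_le_prod_of_subset_of_one_le (singleton_subset_iff.mpr hs)
        (fun r hr => weylFactor_nonneg a (by simp [mem_singleton.mp hr]))
        fun r hr _ => one_le_weylFactor ha hr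
    _ = PA k a := (PA_eq_prod_weylFactor a).symm

theorem prod_Ico_sub_add_div_sub {i s n : ℕ} (c : ℕ) (his : i ≤ s) (hsn : s ≤ n) :
    ∏ j ∈ Ico (s + 1) (n + 1), ((j : ℚ) - i + c) / ((j : ℚ) - i) =
      ((n - i + c).choose c : ℚ) / ((s - i + c).choose c : ℚ) := by
  have hpos (m : ℕ) : ((m + c).choose c : ℚ) ≠ 0 :=
    Nat.cast_ne_zero.mpr (Nat.choose_ne_zero (Nat.le_add_left c m))
  induction n, hsn using Nat.le_induction with
  | base => simp [hpos]
  | succ n hsn ih =>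
    obtain ⟨m, rfl⟩ := Nat.exists_eq_add_of_le (his.trans hsn)
    have hstep : ((m + c).choose c : ℚ) * (m + 1 + c) = (m + 1 + c).choose c * (m + 1) := by
      have := Nat.choose_mul_succ_eq (m + c) c
      rw [show m + c + 1 - c = m + 1 by omega, show m + c + 1 = m + 1 + c by omega] at this
      exact_mod_cast this
    have hcast : ((i + m + 1 : ℕ) : ℚ) - i = m + 1 := by push_cast; ring
    rw [prod_Ico_succ_top (by omega), ih, hcast, show i + m - i = m by omega,
      show i + m + 1 - i = m + 1 by omega, div_mul_div_comm, div_eq_div_iff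
        (mul_ne_zero (hpos _) (by positivity)) (hpos _), hstep]
    ring

/-- The dimension for the highest weight `c ω_s`: only the roots `(i, j)` with
`i ≤ s < j` contribute, and the product over `j` telescopes. -/
theorem PA_update (s : Fin k) (c : ℕ) :
    PA k (update 1 s (c + 1)) =
      ∏ i ∈ range (s + 1), ((k - i + c).choose c : ℚ) / ((s - i + c).choose c : ℚ) := by
  have hsub : range (s + 1) ×ˢ Ico ((s : ℕ) + 1) (k + 1) ⊆ positiveRoots k := by
    intro r hr
    simp only [mem_product, mem_range, mem_Ico] at hr
    exact mem_positiveRoots.mpr (by omega)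
  calc PA k (update 1 s (c + 1))
      = ∏ r ∈ positiveRoots k, weylFactor (update 1 s (c + 1)) r := PA_eq_prod_weylFactor _
    _ = ∏ r ∈ range (s + 1) ×ˢ Ico ((s : ℕ) + 1) (k + 1),
          ((r.2 : ℚ) - r.1 + c) / ((r.2 : ℚ) - r.1) := by
      refine (prod_subset_one_on_sdiff hsub (fun r hr => ?_) fun r hr => ?_).symm
      · rw [mem_sdiff, mem_product, mem_range, mem_Ico] at hr
        have := mem_positiveRoots.mp hr.1
        rw [weylFactor_update s c hr.1, if_neg (by omega)]
      · rw [weylFactor_update s c (hsub hr), if_pos]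
        simp only [mem_product, mem_range, mem_Ico] at hr
        omega
    _ = _ := by
      rw [prod_product]
      refine prod_congr rfl fun i hi => ?_
      exact prod_Ico_sub_add_div_sub c (Nat.lt_succ_iff.mp (mem_range.mp hi)) s.2.le

theorem PA_update_zero (k c : ℕ) :
    PA (k + 1) (update 1 0 (c + 1)) = (k + 1 + c).choose c := by
  simp [PA_update]

theorem PA_update_two (s : Fin k) : PA k (update 1 s 2) = (k + 1).choose (s + 1) := by
  have hnum : ∏ i ∈ range (s + 1), ((k - i + 1).choose 1 : ℚ) =
      (k + 1).descFactorial (s + 1) := by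
    rw [Nat.descFactorial_eq_prod_range, Nat.cast_prod]
    refine prod_congr rfl fun i hi => ?_
    rw [Nat.choose_one_right, Nat.sub_add_comm (by have := mem_range.mp hi; omega)]
  have hden : ∏ i ∈ range (s + 1), ((s - i + 1).choose 1 : ℚ) = ((s : ℕ) + 1).factorial := by
    rw [← Nat.descFactorial_self, Nat.descFactorial_eq_prod_range, Nat.cast_prod]
    refine prod_congr rfl fun i hi => ?_
    rw [Nat.choose_one_right, Nat.sub_add_comm (by have := mem_range.mp hi; omega)]
  rw [PA_update, prod_div_distrib, hnum, hden, Nat.descFactorial_eq_factorial_mul_choose,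
    Nat.cast_mul, mul_div_cancel_left₀ _ (Nat.cast_ne_zero.mpr (Nat.factorial_ne_zero _))]

theorem succ_le_PA {a : Fin k → ℕ} (ha : 1 ≤ a) {s : Fin k} (hs : 2 ≤ a s) :
    (k + 1 : ℚ) ≤ PA k a := by
  calc (k + 1 : ℚ) ≤ (k + 1).choose (s + 1) := by
        exact_mod_cast le_choose (Nat.succ_pos s) (Nat.succ_lt_succ s.2)
    _ = PA k (update 1 s 2) := (PA_update_two s).symm
    _ ≤ PA k a := PA_mono k (update_le_iff.mpr ⟨hs, fun i _ => ha i⟩)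

end Dimension

theorem finite_SLSet (N : ℕ) : (SLSet N).Finite := by
  refine ((range N).sigma fun k => Icc 1 fun _ : Fin (k + 1) => N).finite_toSet.subset ?_
  rintro ⟨k, a⟩ ⟨ha, ⟨s, hs⟩, hN⟩
  have hk : k + 1 + 1 ≤ N := by exact_mod_cast (succ_le_PA ha hs).trans hN
  have ha' (i : Fin (k + 1)) : a i ≤ N := by exact_mod_cast (apply_le_PA ha i).trans hN
  simp only [mem_coe, mem_sigma, mem_range, mem_Icc]
  exact ⟨by omega, ha, ha'⟩

/-- The representation of `SL_{k+2}` with highest weight `(c + 1) ω_s`, indexed by `⟨k, s, c⟩`;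
the shift of `c` leaves out the trivial representation. -/
def fundamentalMultiple (p : Σ k : ℕ, Fin (k + 1) × ℕ) : Σ k : ℕ, Fin (k + 1) → ℕ :=
  ⟨p.1, update 1 p.2.1 (p.2.2 + 2)⟩

theorem fundamentalMultiple_injective : Injective fundamentalMultiple := by
  rintro ⟨k, s, c⟩ ⟨k', s', c'⟩ h
  obtain rfl : k = k' := congrArg Sigma.fst h
  have hs : (update 1 s (c + 2) : Fin (k + 1) → ℕ) s = (update 1 s' (c' + 2) : Fin (k + 1) → ℕ) s :=
    congrFun (eq_of_heq (Sigma.mk.inj h).2) s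
  obtain rfl : s = s' := by
    by_contra hne
    simp [hne] at hs
  obtain rfl : c = c' := by simpa using hs
  rfl

theorem fundamentalMultiple_mem_SLSet {p : Σ k : ℕ, Fin (k + 1) × ℕ} {N : ℕ}
    (h : PA (p.1 + 1) (update 1 p.2.1 (p.2.2 + 2)) ≤ N) : fundamentalMultiple p ∈ SLSet N := by
  have hone : 1 ≤ update (1 : Fin (p.1 + 1) → ℕ) p.2.1 (p.2.2 + 2) :=
    le_update_iff.mpr (by simp)
  exact ⟨hone, ⟨p.2.1, by simp [fundamentalMultiple]⟩, h⟩

/-- Indices, in the sense of `fundamentalMultiple`, of four disjoint families of representations: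
`Sym^{m+1}` for `SL₂`, the standard representation of `SL_{m+3}`, its dual, and `Sym^{m+2}` for
`SL₃`. -/
def familyIndex : ℕ ⊕ ℕ ⊕ ℕ ⊕ ℕ → Σ k : ℕ, Fin (k + 1) × ℕ
  | .inl m => ⟨0, 0, m⟩
  | .inr (.inl m) => ⟨m + 1, 0, 0⟩
  | .inr (.inr (.inl m)) => ⟨m + 1, Fin.last _, 0⟩
  | .inr (.inr (.inr m)) => ⟨1, 0, m + 1⟩

theorem familyIndex_injective : Injective familyIndex := by
  -- Comparing coordinates in `ℕ` avoids heterogeneous equality between elements of `Fin (k + 1)`.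
  refine Injective.of_comp (f := fun p => (p.1, (p.2.1 : ℕ), p.2.2)) ?_
  rintro (m | m | m | m) (m' | m' | m' | m') h <;>
    simp only [comp_apply, familyIndex, Prod.mk.injEq, Fin.val_last, Fin.val_zero] at h <;>
    grind

/-- Parameters whose representation, under `familyIndex`, has dimension at most `N` as soon as
`36 ≤ N`. -/
def smallParams (N : ℕ) : Finset (ℕ ⊕ ℕ ⊕ ℕ ⊕ ℕ) :=
  (range (N - 1)).disjSum ((range (N - 2)).disjSum ((range (N - 2)).disjSum (range 6)))

theorem fundamentalMultiple_familyIndex_mem_SLSet {N : ℕ} (hN : 36 ≤ N)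
    {x : ℕ ⊕ ℕ ⊕ ℕ ⊕ ℕ} (hx : x ∈ smallParams N) :
    fundamentalMultiple (familyIndex x) ∈ SLSet N := by
  apply fundamentalMultiple_mem_SLSet
  rcases x with m | m | m | m <;>
    simp only [smallParams, inl_mem_disjSum, inr_mem_disjSum, mem_range] at hx
  · calc PA 1 (update 1 0 (m + 2)) = (m + 2 : ℕ) := by
          rw [PA_update_zero 0 (m + 1), zero_add, add_comm 1, Nat.choose_succ_self_right]
      _ ≤ N := Nat.cast_le.mpr (by omega)
  · calc PA (m + 2) (update 1 0 2) = (m + 3 : ℕ) := by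
          rw [PA_update_zero (m + 1) 1, Nat.choose_one_right]
      _ ≤ N := Nat.cast_le.mpr (by omega)
  · calc PA (m + 2) (update 1 (Fin.last (m + 1)) 2) = (m + 3 : ℕ) := by
          rw [PA_update_two, Fin.val_last, Nat.choose_succ_self_right]
      _ ≤ N := Nat.cast_le.mpr (by omega)
  · calc PA 2 (update 1 0 (m + 3)) = ((m + 4).choose 2 : ℕ) := by
          rw [PA_update_zero 1 (m + 2), add_comm (1 + 1), Nat.choose_symm_add]
      _ ≤ N := Nat.cast_le.mpr ((Nat.choose_le_choose 2 (by omega : m + 4 ≤ 9)).trans hN)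

theorem three_mul_lt_ncard_SLSet {N : ℕ} (hN : 36 ≤ N) : 3 * N < (SLSet N).ncard := by
  calc 3 * N < #(smallParams N) := by
        simp only [smallParams, card_disjSum, card_range]
        omega
    _ = (smallParams N : Set (ℕ ⊕ ℕ ⊕ ℕ ⊕ ℕ)).ncard := (Set.ncard_coe_finset _).symm
    _ ≤ (SLSet N).ncard :=
      Set.ncard_le_ncard_of_injOn (fundamentalMultiple ∘ familyIndex)
        (fun _ hx => fundamentalMultiple_familyIndex_mem_SLSet hN hx)
        (fundamentalMultiple_injective.comp familyIndex_injective).injOn (finite_SLSet N)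

/-- For all sufficiently large `N`, `R_N(SL) > 3N`; in particular any linear bound
`R_N(SL) ≤ C · N` (for all positive `N`) forces `C > 3`. -/
theorem sl_count_gt_three_n :
    (∃ M : ℕ, ∀ N : ℕ, M ≤ N → 3 * N < (SLSet N).ncard) ∧
    ∀ C : ℝ, (∀ N : ℕ, 0 < N → ((SLSet N).ncard : ℝ) ≤ C * N) → 3 < C := by
  refine ⟨⟨36, fun N => three_mul_lt_ncard_SLSet⟩, fun C hC => ?_⟩
  have hlt : ((3 * 36 : ℕ) : ℝ) < (SLSet 36).ncard :=
    Nat.cast_lt.mpr (three_mul_lt_ncard_SLSet le_rfl)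
  have hle : ((SLSet 36).ncard : ℝ) ≤ C * (36 : ℕ) := hC 36 (by norm_num)
  push_cast at hlt hle
  linarith
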